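/- Let p > 0, b > 0, θ ∈ ℝ, ρ ∈ (−1, 1). Let W have the Gamma distribution of shape p and rate b²/2, independent of (Z₁, Z₂) having the bivariate standard normal density with correlation ρ, and set X_i = θW + √W·Z_i, i = 1, 2, with common marginal distribution function F. Set α = √((1−ρ)/(1+ρ)), β = √(θ²(1+α²)+b²), γ = β + θ√(1+α²), δ = θ + √(θ²+b²), τ = √(1+α²)·γ/δ, K̄ = 2^{p−1}b^{−2p}Γ(p), A = [2K̄·(θ²+b²)^{p/2}·δ]^{−1}, C₁ = (1+α²)^{(2p−3)/4}/(√(2π)·K̄·β^{p−1/2}·α·γ²·δ^{p−3/2}), and C₂ = A^{−τ}·δ^{(p−1)τ}. Then lim_{u→0⁺} P(X₁ ≤ F^{−1}(u), X₂ ≤ F^{−1}(u)) / (u^τ·|log u|^{(p−3/2)−(p−1)τ}) = C₁·C₂. Equivalently, the copula diagonal satisfies C(u,u) = u^τ·L(u) where L(u) ∼ C₁C₂·|log u|^{(p−1)(1−τ)−1/2} as u → 0⁺. -/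

import Mathlib

open MeasureTheory Real Set Filter

/-!
Conditionally on the Gamma variable, the vector is Gaussian; integrating the Gamma variable out
gives the explicit density `exp (B m x) * ‖x‖ ^ ν * K_ν (β * ‖x‖)` up to a constant, where `B` is
the precision form, `‖x‖ = √(B x x)` and `K_ν` is a Bessel function. This covers the marginal law
(dimension one) and the joint law (dimension two) at once.

Move the orthant `{x | ∀ i, x i ≤ -y}` to the origin along the diagonal. Since
`K_ν z ~ √(π / (2 z)) * exp (-z)` and `‖y • e + u‖ - y * ‖e‖ → B e u / ‖e‖`, dominated convergence
gives each tail probability as `c * y ^ k * exp (-r * y) * (1 + o(1))`, with explicit constants.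
Finally `|log F(-y)| / y → δ` converts the powers of `y` into powers of `|log u|` for `u = F(-y)`.
-/

open Module ProbabilityTheory
open scoped Topology ENNReal

section Bessel

/-- The modified Bessel function of the second kind `K_ν`, through its integral representation
over the whole line; the integral converges for `0 < x` only. -/
noncomputable def besselK (ν x : ℝ) : ℝ := 2⁻¹ * ∫ t, exp (-(x * cosh t) + ν * t)

lemma one_add_sq_div_two_le_cosh (t : ℝ) : 1 + t ^ 2 / 2 ≤ cosh t := by
  have hcosh : cosh t = 1 + 2 * sinh (t / 2) ^ 2 := by
    have := cosh_two_mul (t / 2)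
    rw [cosh_sq', mul_div_cancel₀ t two_ne_zero] at this
    linarith
  have hsinh : (t / 2) ^ 2 ≤ sinh (t / 2) ^ 2 := by
    rw [sq_le_sq, abs_sinh]
    exact self_le_sinh_iff.2 (abs_nonneg _)
  linarith

lemma tendsto_sq_mul_cosh_div_sub_one (s : ℝ) :
    Tendsto (fun r : ℝ => r ^ 2 * (cosh (s / r) - 1)) atTop (𝓝 (s ^ 2 / 2)) := by
  have hsinh : Tendsto (fun r : ℝ => r * sinh (r⁻¹ * (s / 2))) atTop (𝓝 (s / 2)) := by
    simpa using (hasDerivAt_sinh 0).hasFDerivAt.lim_real (s / 2)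
  convert (hsinh.pow 2).const_mul 2 using 2 with r
  · have := cosh_two_mul (s / r / 2)
    rw [cosh_sq', mul_div_cancel₀ _ two_ne_zero] at this
    rw [this, show r⁻¹ * (s / 2) = s / r / 2 by ring]
    ring
  · ring

lemma integrable_exp_neg_mul_sq_add_mul {a : ℝ} (ha : 0 < a) (ν : ℝ) :
    Integrable fun t : ℝ => exp (-(a * t ^ 2) + ν * t) := by
  convert ((integrable_exp_neg_mul_sq ha).comp_sub_right (ν / (2 * a))).const_mul
    (exp (ν ^ 2 / (4 * a))) using 2 with t
  rw [← Real.exp_add]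
  congr 1
  field_simp
  ring

lemma integrable_exp_neg_mul_cosh_add_mul (ν : ℝ) {x : ℝ} (hx : 0 < x) :
    Integrable fun t : ℝ => exp (-(x * cosh t) + ν * t) := by
  refine (integrable_exp_neg_mul_sq_add_mul (half_pos hx) ν).mono'
    (by fun_prop) (ae_of_all _ fun t => ?_)
  rw [norm_of_nonneg (exp_pos _).le, exp_le_exp]
  nlinarith [one_add_sq_div_two_le_cosh t]

lemma besselK_nonneg (ν x : ℝ) : 0 ≤ besselK ν x :=
  mul_nonneg (by norm_num) (integral_nonneg fun _ => (exp_pos _).le)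

@[fun_prop]
lemma measurable_besselK (ν : ℝ) : Measurable (besselK ν) := by
  have h : Continuous (Function.uncurry fun x t : ℝ => exp (-(x * cosh t) + ν * t)) := by
    unfold Function.uncurry
    fun_prop
  exact h.stronglyMeasurable.integral_prod_right.measurable.const_mul _

lemma exp_sq_mul_one_sub_cosh_div_add_le (ν s : ℝ) {r : ℝ} (hr : 1 ≤ r) :
    exp (-(r ^ 2 * (cosh (s / r) - 1)) + ν * (s / r)) ≤
      exp (-(1 / 2 * s ^ 2) + |ν| * s) + exp (-(1 / 2 * s ^ 2) + -|ν| * s) := by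
  have hr0 : 0 < r := by linarith
  have hcosh : 1 / 2 * s ^ 2 ≤ r ^ 2 * (cosh (s / r) - 1) := by
    have := mul_le_mul_of_nonneg_left (one_add_sq_div_two_le_cosh (s / r)) (sq_nonneg r)
    rw [show r ^ 2 * (1 + (s / r) ^ 2 / 2) = r ^ 2 + 1 / 2 * s ^ 2 by field_simp] at this
    linarith
  have hlin : ν * (s / r) ≤ |ν| * |s| := by
    refine (le_abs_self _).trans ?_
    rw [abs_mul, abs_div, abs_of_pos hr0]
    gcongr
    exact div_le_self (abs_nonneg s) hr
  rcases abs_cases s with ⟨hs, -⟩ | ⟨hs, -⟩ <;> rw [hs] at hlin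
  · refine le_add_of_le_of_nonneg (exp_le_exp.2 ?_) (exp_pos _).le
    linarith
  · refine le_add_of_nonneg_of_le (exp_pos _).le (exp_le_exp.2 ?_)
    linarith

/-- Laplace's method in the variable `s = r * t` around the minimum of `cosh` at `0`. -/
lemma tendsto_mul_exp_sq_mul_besselK_sq (ν : ℝ) :
    Tendsto (fun r : ℝ => r * exp (r ^ 2) * besselK ν (r ^ 2)) atTop (𝓝 √(π / 2)) := by
  have hgauss : ∫ s : ℝ, exp (-(s ^ 2 / 2)) = 2 * √(π / 2) := by
    rw [show (2 : ℝ) * √(π / 2) = √(π / (1 / 2)) by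
      rw [show π / (1 / 2) = 2 ^ 2 * (π / 2) by ring, sqrt_mul (by positivity),
        sqrt_sq (by norm_num)], ← integral_gaussian]
    congr with s
    ring_nf
  have hrescale : ∀ r : ℝ, 0 < r → r * exp (r ^ 2) * besselK ν (r ^ 2) =
      2⁻¹ * ∫ s, exp (-(r ^ 2 * (cosh (s / r) - 1)) + ν * (s / r)) := by
    intro r hr
    have hcov := Measure.integral_comp_div (fun t => exp (-(r ^ 2 * (cosh t - 1)) + ν * t)) r
    rw [abs_of_pos hr, smul_eq_mul] at hcov
    rw [hcov, besselK, mul_left_comm, mul_assoc r, ← integral_const_mul]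
    simp only [← Real.exp_add]
    ring_nf
  rw [show √(π / 2) = 2⁻¹ * ∫ s : ℝ, exp (-(s ^ 2 / 2)) by rw [hgauss]; ring]
  refine Tendsto.congr' ((eventually_gt_atTop 0).mono fun r hr => (hrescale r hr).symm)
    (Tendsto.const_mul _ ?_)
  refine tendsto_integral_filter_of_dominated_convergence
    (fun s => exp (-(1 / 2 * s ^ 2) + |ν| * s) + exp (-(1 / 2 * s ^ 2) + -|ν| * s))
    (Eventually.of_forall fun r => by fun_prop) ?_
    ((integrable_exp_neg_mul_sq_add_mul one_half_pos _).add
      (integrable_exp_neg_mul_sq_add_mul one_half_pos _)) (ae_of_all _ fun s => ?_)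
  · filter_upwards [eventually_ge_atTop 1] with r hr
    refine ae_of_all _ fun s => ?_
    rw [norm_of_nonneg (exp_pos _).le]
    exact exp_sq_mul_one_sub_cosh_div_add_le ν s hr
  · refine (Real.continuous_exp.tendsto _).comp ?_
    simpa using (tendsto_sq_mul_cosh_div_sub_one s).neg.add
      ((tendsto_const_nhds.div_atTop tendsto_id).const_mul ν)

lemma tendsto_sqrt_mul_exp_mul_besselK (ν : ℝ) :
    Tendsto (fun x => √x * exp x * besselK ν x) atTop (𝓝 √(π / 2)) := by
  refine ((tendsto_mul_exp_sq_mul_besselK_sq ν).comp tendsto_sqrt_atTop).congr' ?_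
  filter_upwards [eventually_ge_atTop 0] with x hx
  simp only [Function.comp_apply, sq_sqrt hx]

/-- The substitution `w = (q / β) * exp t` symmetrizes the exponent. -/
lemma lintegral_rpow_mul_exp_neg_add_div (ν : ℝ) {β q : ℝ} (hβ : 0 < β) (hq : 0 < q) :
    ∫⁻ w in Ioi 0, ENNReal.ofReal (w ^ (ν - 1) * exp (-(β ^ 2 * w + q ^ 2 / w) / 2)) =
      ENNReal.ofReal (2 * (q / β) ^ ν * besselK ν (β * q)) := by
  have hc : 0 < q / β := by positivity
  have himage : (fun t => q / β * exp t) '' univ = Ioi 0 := by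
    rw [image_univ, ← Function.comp_def (q / β * ·), range_comp, range_exp,
      image_mul_left_Ioi hc, mul_zero]
  have hinj : InjOn (fun t => q / β * exp t) univ :=
    ((mul_right_injective₀ hc.ne').comp exp_injective).injOn
  rw [← himage, lintegral_image_eq_lintegral_abs_deriv_mul MeasurableSet.univ
    (fun t _ => ((Real.hasDerivAt_exp t).const_mul _).hasDerivWithinAt) hinj, setLIntegral_univ]
  have hintegrand (t : ℝ) : |q / β * exp t| * ((q / β * exp t) ^ (ν - 1) *
      exp (-(β ^ 2 * (q / β * exp t) + q ^ 2 / (q / β * exp t)) / 2)) =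
      (q / β) ^ ν * exp (-(β * q * cosh t) + ν * t) := by
    have hpow : (q / β * exp t) * (q / β * exp t) ^ (ν - 1) = (q / β) ^ ν * exp (ν * t) := by
      rw [mul_comm, ← rpow_add_one (by positivity), sub_add_cancel,
        mul_rpow hc.le (exp_pos t).le, ← Real.exp_mul, mul_comm t]
    rw [abs_of_pos (by positivity), ← mul_assoc, hpow, mul_assoc, ← Real.exp_add, cosh_eq,
      Real.exp_neg]
    congr 2
    field_simp
    ring
  simp only [← ENNReal.ofReal_mul (abs_nonneg _), hintegrand]
  rw [← ofReal_integral_eq_lintegral_ofReal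
    ((integrable_exp_neg_mul_cosh_add_mul ν (mul_pos hβ hq)).const_mul _)
    (ae_of_all _ fun t => by positivity), integral_const_mul, besselK]
  ring_nf

end Bessel

section Mixture

variable {E : Type*} [NormedAddCommGroup E] [NormedSpace ℝ E] [FiniteDimensional ℝ E]
  [MeasurableSpace E] [BorelSpace E] {μ : Measure E} [μ.IsAddHaarMeasure]

lemma map_add_smul_withDensity {φ : E → ℝ≥0∞} (hφ : Measurable φ) (m : E) {r : ℝ} (hr : 0 < r) :
    (μ.withDensity φ).map (fun z => m + r • z) =
      μ.withDensity fun x => ENNReal.ofReal ((r ^ finrank ℝ E)⁻¹) * φ (r⁻¹ • (x - m)) := by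
  have hmap : μ.map (fun z => m + r • z) = ENNReal.ofReal ((r ^ finrank ℝ E)⁻¹) • μ := by
    rw [← Function.comp_def (m + ·), ← Measure.map_map (by fun_prop) (by fun_prop),
      Measure.map_addHaar_smul μ hr.ne', Measure.map_smul, map_add_left_eq_self,
      abs_of_pos (by positivity)]
  have hmeas : Measurable fun x => φ (r⁻¹ • (x - m)) := by fun_prop
  ext s hs
  rw [Measure.map_apply (by fun_prop) hs, withDensity_apply _ (hs.preimage (by fun_prop)),
    withDensity_apply _ hs, lintegral_const_mul _ hmeas, ← smul_eq_mul, ← lintegral_smul_measure,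
    ← Measure.restrict_smul, ← hmap, setLIntegral_map hs hmeas (by fun_prop)]
  simp only [add_sub_cancel_left, smul_smul, inv_mul_cancel₀ hr.ne', one_smul]

variable {Ω : Type*} [MeasurableSpace Ω] {P : Measure Ω} [IsProbabilityMeasure P]

lemma map_smul_add_sqrt_smul_eq_withDensity {W : Ω → ℝ} {Z : Ω → E} {φ : E → ℝ≥0∞}
    (hW : Measurable W) (hZ : Measurable Z) (hφ : Measurable φ)
    (hpos : ∀ᵐ w ∂P.map W, 0 < w) (hlaw : P.map Z = μ.withDensity φ) (hindep : IndepFun W Z P)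
    (m : E) :
    P.map (fun ω => W ω • m + √(W ω) • Z ω) = μ.withDensity fun x =>
      ∫⁻ w, ENNReal.ofReal ((√w ^ finrank ℝ E)⁻¹) * φ ((√w)⁻¹ • (x - w • m)) ∂(P.map W) := by
  have hprod := (indepFun_iff_map_prod_eq_prod_map_map hW.aemeasurable hZ.aemeasurable).1 hindep
  have hg : Measurable fun q : ℝ × E => q.1 • m + √q.1 • q.2 := by fun_prop
  have : IsProbabilityMeasure (P.map W) := Measure.isProbabilityMeasure_map hW.aemeasurable
  ext s hs
  rw [← Function.comp_def (fun q : ℝ × E => q.1 • m + √q.1 • q.2) fun ω => (W ω, Z ω),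
    ← Measure.map_map hg (hW.prodMk hZ), hprod, Measure.map_apply hg hs,
    Measure.prod_apply (hg hs), withDensity_apply _ hs, lintegral_lintegral_swap (by fun_prop)]
  refine lintegral_congr_ae (hpos.mono fun w hw => ?_)
  dsimp only
  rw [← withDensity_apply _ hs, ← map_add_smul_withDensity hφ _ (sqrt_pos.2 hw), ← hlaw,
    Measure.map_apply (by fun_prop) hs]
  rfl

end Mixture

section BesselDensity

variable {E : Type*} [NormedAddCommGroup E] [NormedSpace ℝ E] {B : E →L[ℝ] E →L[ℝ] ℝ}

lemma bilin_apply_comm (hB : B.toBilinForm.IsPosSemidef) (x y : E) : B x y = B y x :=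
  hB.eq x y

lemma bilin_apply_self_nonneg (hB : B.toBilinForm.IsPosSemidef) (x : E) : 0 ≤ B x x :=
  hB.nonneg x

lemma sq_bilin_apply_le (hB : B.toBilinForm.IsPosSemidef) (x y : E) :
    B x y ^ 2 ≤ B x x * B y y :=
  B.toBilinForm.apply_sq_le_of_symm hB.nonneg ⟨hB.eq⟩ x y

/-- The unnormalized density at `x` of a Gaussian vector with precision form `B`, mixed in mean
(along `m`) and in variance by a Gamma variable. -/
noncomputable def besselDensity (B : E →L[ℝ] E →L[ℝ] ℝ) (m : E) (β ν : ℝ) (x : E) : ℝ :=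
  exp (B m x) * √(B x x) ^ ν * besselK ν (β * √(B x x))

lemma besselDensity_nonneg (m : E) (β ν : ℝ) (x : E) : 0 ≤ besselDensity B m β ν x :=
  mul_nonneg (by positivity) (besselK_nonneg _ _)

lemma measurable_besselDensity [MeasurableSpace E] [BorelSpace E] (m : E) (β ν : ℝ) :
    Measurable (besselDensity B m β ν) := by
  have hnorm : Measurable fun x => √(B x x) := Continuous.measurable (by fun_prop)
  have hlin : Measurable fun x => exp (B m x) := Continuous.measurable (by fun_prop)
  exact (hlin.mul (hnorm.pow_const ν)).mul ((measurable_besselK ν).comp (hnorm.const_mul β))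

lemma measurable_gammaPDF (a r : ℝ) : Measurable (gammaPDF a r) :=
  (measurable_gammaPDFReal a r).ennreal_ofReal

lemma lintegral_gammaMeasure {f : ℝ → ℝ≥0∞} (hf : Measurable f) (a r : ℝ) :
    ∫⁻ w, f w ∂(gammaMeasure a r) = ∫⁻ w in Ioi 0, gammaPDF a r w * f w := by
  rw [gammaMeasure, lintegral_withDensity_eq_lintegral_mul _ (measurable_gammaPDF a r) hf,
    setLIntegral_congr Ioi_ae_eq_Ici, ← lintegral_indicator measurableSet_Ici]
  refine lintegral_congr fun w => ?_
  rcases lt_or_ge w 0 with hw | hw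
  · simp [gammaPDF_of_neg hw, hw]
  · simp [hw]

lemma apply_inv_sqrt_smul_sub_smul_self (hB : B.toBilinForm.IsPosSemidef) {w : ℝ} (hw : 0 < w)
    (m x : E) :
    B ((√w)⁻¹ • (x - w • m)) ((√w)⁻¹ • (x - w • m)) =
      B x x / w - 2 * B m x + B m m * w := by
  have hsymm : B x m = B m x := bilin_apply_comm hB x m
  have hsq : (√w)⁻¹ * (√w)⁻¹ = w⁻¹ := by rw [← mul_inv, mul_self_sqrt hw.le]
  simp only [map_smul, map_sub, smul_apply, sub_apply,
    smul_eq_mul, hsymm]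
  linear_combination (B x x - 2 * w * B m x + w ^ 2 * B m m) * hsq +
    (w * B m m - 2 * B m x) * inv_mul_cancel₀ hw.ne'

lemma gammaPDF_mul_gaussian (hB : B.toBilinForm.IsPosSemidef) {p b c w : ℝ} (hp : 0 < p)
    (hc : 0 ≤ c) (hw : 0 < w) (d : ℕ) (m x : E) :
    gammaPDF p (b ^ 2 / 2) w * (ENNReal.ofReal ((√w ^ d)⁻¹) *
        ENNReal.ofReal (c * exp (-(B ((√w)⁻¹ • (x - w • m)) ((√w)⁻¹ • (x - w • m))) / 2))) =
      ENNReal.ofReal (c * ((b ^ 2 / 2) ^ p / Gamma p) * exp (B m x)) *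
        ENNReal.ofReal (w ^ (p - d / 2 - 1) *
          exp (-((B m m + b ^ 2) * w + B x x / w) / 2)) := by
  have hpow : (√w ^ d)⁻¹ * w ^ (p - 1) = w ^ (p - d / 2 - 1) := by
    rw [sqrt_eq_rpow, ← rpow_natCast, ← rpow_mul hw.le, ← rpow_neg hw.le, ← rpow_add hw]
    ring_nf
  have hexp : exp (-(b ^ 2 / 2 * w)) * exp (-(B x x / w - 2 * B m x + B m m * w) / 2) =
      exp (B m x) * exp (-((B m m + b ^ 2) * w + B x x / w) / 2) := by
    simp only [← Real.exp_add]
    ring_nf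
  rw [gammaPDF_of_nonneg hw.le, apply_inv_sqrt_smul_sub_smul_self hB hw,
    ← ENNReal.ofReal_mul (by positivity), ← ENNReal.ofReal_mul (by positivity),
    ← ENNReal.ofReal_mul (by positivity), ← hpow]
  congr 1
  linear_combination (c * ((b ^ 2 / 2) ^ p / Gamma p) * w ^ (p - 1) * (√w ^ d)⁻¹) * hexp

lemma lintegral_gammaMeasure_gaussian [MeasurableSpace E] [BorelSpace E]
    (hB : B.toBilinForm.IsPosSemidef) {p b c : ℝ} (hp : 0 < p) (hb : 0 < b) (hc : 0 ≤ c) (d : ℕ)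
    (m : E) {x : E} (hx : 0 < B x x) :
    ∫⁻ w, ENNReal.ofReal ((√w ^ d)⁻¹) *
        ENNReal.ofReal (c * exp (-(B ((√w)⁻¹ • (x - w • m)) ((√w)⁻¹ • (x - w • m))) / 2))
        ∂(gammaMeasure p (b ^ 2 / 2)) =
      ENNReal.ofReal (2 * c * ((b ^ 2 / 2) ^ p / Gamma p) *
        √(B m m + b ^ 2) ^ (d / 2 - p) * besselDensity B m √(B m m + b ^ 2) (p - d / 2) x) := by
  have hm : 0 ≤ B m m := bilin_apply_self_nonneg hB m
  have hβ : 0 < √(B m m + b ^ 2) := by positivity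
  have hq : 0 < √(B x x) := sqrt_pos.2 hx
  have hmeas : Measurable fun w : ℝ =>
      exp (-(B ((√w)⁻¹ • (x - w • m)) ((√w)⁻¹ • (x - w • m))) / 2) := by
    have hquad : Continuous fun z => exp (-(B z z) / 2) := by fun_prop
    exact hquad.measurable.comp (by fun_prop)
  rw [lintegral_gammaMeasure (by fun_prop), setLIntegral_congr_fun measurableSet_Ioi fun w hw =>
    gammaPDF_mul_gaussian hB hp hc hw d m x, lintegral_const_mul _ (by fun_prop)]
  have hbessel := lintegral_rpow_mul_exp_neg_add_div (p - d / 2) hβ hq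
  rw [sq_sqrt (by positivity), sq_sqrt hx.le] at hbessel
  rw [hbessel, ← ENNReal.ofReal_mul (by positivity), div_rpow hq.le hβ.le,
    show (d / 2 - p : ℝ) = -(p - d / 2) by ring, rpow_neg hβ.le, besselDensity]
  congr 1
  ring

variable [FiniteDimensional ℝ E] [MeasurableSpace E] [BorelSpace E] {μ : Measure E}
  [μ.IsAddHaarMeasure] {Ω : Type*} [MeasurableSpace Ω] {P : Measure Ω} [IsProbabilityMeasure P]

lemma ae_pos_gammaMeasure (a r : ℝ) : ∀ᵐ w ∂(gammaMeasure a r), 0 < w := by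
  rw [gammaMeasure, ae_withDensity_iff (measurable_gammaPDF a r)]
  filter_upwards [compl_mem_ae_iff.2 (measure_singleton (0 : ℝ))] with w hne hpdf
  exact (Ne.symm hne).lt_of_le (le_of_not_gt fun hneg => hpdf (gammaPDF_of_neg hneg))

lemma measureReal_gammaMixture_mem (hB : B.toBilinForm.IsPosSemidef) {p b c : ℝ} (hp : 0 < p)
    (hb : 0 < b) (hc : 0 ≤ c) {W : Ω → ℝ} {Z : Ω → E} (hW : Measurable W) (hZ : Measurable Z)
    (hWlaw : P.map W = gammaMeasure p (b ^ 2 / 2))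
    (hZlaw : P.map Z = μ.withDensity fun z => ENNReal.ofReal (c * exp (-(B z z) / 2)))
    (hindep : IndepFun W Z P) (m : E) {T : Set E} (hT : MeasurableSet T)
    (hTpos : ∀ x ∈ T, 0 < B x x) :
    P.real {ω | W ω • m + √(W ω) • Z ω ∈ T} = 2 * c * ((b ^ 2 / 2) ^ p / Gamma p) *
      √(B m m + b ^ 2) ^ (finrank ℝ E / 2 - p) *
      ∫ x in T, besselDensity B m √(B m m + b ^ 2) (p - finrank ℝ E / 2) x ∂μ := by
  have hm : 0 ≤ B m m := bilin_apply_self_nonneg hB m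
  have hφ : Measurable fun z : E => ENNReal.ofReal (c * exp (-(B z z) / 2)) := by
    have hquad : Continuous fun z => c * exp (-(B z z) / 2) := by fun_prop
    exact hquad.measurable.ennreal_ofReal
  have hX : Measurable fun ω => W ω • m + √(W ω) • Z ω := by fun_prop
  rw [← integral_const_mul, integral_eq_lintegral_of_nonneg_ae
    (ae_of_all _ fun x => mul_nonneg (by positivity) (besselDensity_nonneg m _ _ x))
    ((measurable_besselDensity m _ _).const_mul _).aestronglyMeasurable, measureReal_def]
  congr 1
  have hlaw := map_smul_add_sqrt_smul_eq_withDensity hW hZ hφ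
    (hWlaw ▸ ae_pos_gammaMeasure p (b ^ 2 / 2)) hZlaw hindep m
  rw [show {ω | W ω • m + √(W ω) • Z ω ∈ T} = (fun ω => W ω • m + √(W ω) • Z ω) ⁻¹' T from rfl,
    ← Measure.map_apply hX hT, hlaw, withDensity_apply _ hT, hWlaw]
  exact setLIntegral_congr_fun hT fun x hx =>
    lintegral_gammaMeasure_gaussian hB hp hb hc _ m (hTpos x hx)

end BesselDensity

section Shift

lemma rpow_mul_besselK_mul_exp_mul_rpow (ν : ℝ) {β N N₀ : ℝ} (hβ : 0 < β) (hN : 0 < N)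
    (hN₀ : 0 < N₀) :
    N ^ ν * besselK ν (β * N) * exp (β * N₀) * N₀ ^ (1 / 2 - ν) =
      (√β)⁻¹ * (√(β * N) * exp (β * N) * besselK ν (β * N)) * (N / N₀) ^ (ν - 1 / 2) *
        exp (-(β * (N - N₀))) := by
  have hexp : exp (β * N₀) = exp (β * N) * exp (-(β * (N - N₀))) := by
    rw [← Real.exp_add]
    ring_nf
  have hpow : N ^ ν = √N * N ^ (ν - 1 / 2) := by
    rw [sqrt_eq_rpow, ← rpow_add hN]
    ring_nf
  have hsqrt : (√β)⁻¹ * √(β * N) = √N := by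
    rw [sqrt_mul hβ.le, inv_mul_cancel_left₀ (sqrt_pos.2 hβ).ne']
  rw [hexp, hpow, ← hsqrt, div_rpow hN.le hN₀.le, div_eq_mul_inv (N ^ _), ← rpow_neg hN₀.le,
    neg_sub]
  ring

lemma tendsto_rpow_mul_besselK_mul_exp_mul_rpow {ι : Type*} {l : Filter ι} {N N₀ : ι → ℝ} {d : ℝ}
    (ν : ℝ) {β : ℝ} (hβ : 0 < β) (hN₀ : Tendsto N₀ l atTop)
    (hsub : Tendsto (fun i => N i - N₀ i) l (𝓝 d)) :
    Tendsto (fun i => N i ^ ν * besselK ν (β * N i) * exp (β * N₀ i) * N₀ i ^ (1 / 2 - ν)) l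
      (𝓝 (√(π / (2 * β)) * exp (-(β * d)))) := by
  have hN : Tendsto N l atTop := by simpa using hN₀.atTop_add hsub
  have hratio : Tendsto (fun i => N i / N₀ i) l (𝓝 1) := by
    have h : Tendsto (fun i => 1 + (N i - N₀ i) / N₀ i) l (𝓝 (1 + 0)) :=
      (hsub.div_atTop hN₀).const_add 1
    rw [add_zero] at h
    refine h.congr' ?_
    filter_upwards [hN₀.eventually_ne_atTop 0] with i hi
    field_simp
    ring
  have hbessel := ((tendsto_sqrt_mul_exp_mul_besselK ν).comp (hN.const_mul_atTop hβ)).const_mul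
    (√β)⁻¹
  have hexp := (Real.continuous_exp.tendsto _).comp (hsub.const_mul β).neg
  have hprod := (hbessel.mul (hratio.rpow_const (p := ν - 1 / 2) (Or.inl one_ne_zero))).mul hexp
  have hconst : (√β)⁻¹ * √(π / 2) = √(π / (2 * β)) := by
    rw [← sqrt_inv, ← sqrt_mul (by positivity)]
    congr 1
    field_simp
  rw [one_rpow, mul_one, hconst] at hprod
  refine hprod.congr' ?_
  filter_upwards [hN.eventually_gt_atTop 0, hN₀.eventually_gt_atTop 0] with i hi hi₀
  exact (rpow_mul_besselK_mul_exp_mul_rpow ν hβ hi hi₀).symm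

lemma exists_rpow_mul_besselK_mul_exp_mul_rpow_le (ν : ℝ) {β : ℝ} (hβ : 0 < β) :
    ∃ M, 0 ≤ M ∧ ∀ᶠ N₀ in atTop, ∀ N, N₀ ≤ N →
      N ^ ν * besselK ν (β * N) * exp (β * N₀) * N₀ ^ (1 / 2 - ν) ≤
        M * (N / N₀) ^ |ν - 1 / 2| * exp (-(β * (N - N₀))) := by
  have hbdd : ∀ᶠ x in atTop, √x * exp x * besselK ν x ≤ √(π / 2) + 1 :=
    (tendsto_sqrt_mul_exp_mul_besselK ν).eventually_le_const (lt_add_one _)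
  refine ⟨(√β)⁻¹ * (√(π / 2) + 1), by positivity, ?_⟩
  filter_upwards [eventually_gt_atTop 0, ((tendsto_id.const_mul_atTop hβ).eventually
    (eventually_forall_ge_atTop.2 hbdd))] with N₀ hN₀ hle N hN
  have hN0 : 0 < N := hN₀.trans_le hN
  rw [rpow_mul_besselK_mul_exp_mul_rpow ν hβ hN0 hN₀]
  gcongr
  · exact hle _ (mul_le_mul_of_nonneg_left hN hβ.le)
  · exact (one_le_div hN₀).2 hN
  · exact le_abs_self _

lemma exists_one_add_mul_rpow_le_exp (D : ℝ) {s ε : ℝ} (hD : 0 ≤ D) (hs : 0 ≤ s) (hε : 0 < ε) :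
    ∃ M, ∀ x, 0 ≤ x → (1 + D * x) ^ s ≤ M * exp (ε * x) := by
  have hη : 0 < ε / (s + 1) := by positivity
  refine ⟨(1 + D / (ε / (s + 1))) ^ s, fun x hx => ?_⟩
  have hlin : 1 + D * x ≤ (1 + D / (ε / (s + 1))) * exp (ε / (s + 1) * x) :=
    calc 1 + D * x ≤ (1 + D / (ε / (s + 1))) * (1 + ε / (s + 1) * x) := by
          have : D / (ε / (s + 1)) * (ε / (s + 1) * x) = D * x := by field_simp
          nlinarith [mul_nonneg hη.le hx, div_nonneg hD hη.le]
      _ ≤ _ := by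
          gcongr
          linarith [add_one_le_exp (ε / (s + 1) * x)]
  calc (1 + D * x) ^ s ≤ ((1 + D / (ε / (s + 1))) * exp (ε / (s + 1) * x)) ^ s := by
        gcongr
    _ = (1 + D / (ε / (s + 1))) ^ s * exp (ε * (s / (s + 1)) * x) := by
        rw [mul_rpow (by positivity) (exp_pos _).le, ← Real.exp_mul]
        ring_nf
    _ ≤ _ := by
        gcongr
        exact mul_le_of_le_one_right hε.le ((div_le_one (by positivity)).2 (by linarith))

end Shift

section Tail

variable {E : Type*} [NormedAddCommGroup E] [NormedSpace ℝ E] {B : E →L[ℝ] E →L[ℝ] ℝ} {e u : E}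

lemma apply_smul_add_self (hB : B.toBilinForm.IsPosSemidef) (e u : E) (y : ℝ) :
    B (y • e + u) (y • e + u) = B e e * y ^ 2 + 2 * B e u * y + B u u := by
  have hsymm : B u e = B e u := bilin_apply_comm hB u e
  simp only [map_add, map_smul, add_apply, smul_apply, smul_eq_mul, hsymm]
  ring

lemma sqrt_apply_smul_add_le (hB : B.toBilinForm.IsPosSemidef) (e u : E) {y : ℝ} (hy : 0 ≤ y) :
    √(B (y • e + u) (y • e + u)) ≤ √(B e e) * y + √(B u u) := by
  have hcs : B e u ≤ √(B e e) * √(B u u) := by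
    rw [← sqrt_mul (bilin_apply_self_nonneg hB e)]
    exact le_sqrt_of_sq_le (sq_bilin_apply_le hB e u)
  rw [sqrt_le_left (by positivity), apply_smul_add_self hB, add_sq, mul_pow,
    sq_sqrt (bilin_apply_self_nonneg hB e), sq_sqrt (bilin_apply_self_nonneg hB u)]
  nlinarith

lemma le_sqrt_apply_smul_add (hB : B.toBilinForm.IsPosSemidef) (he : 0 < B e e) (u : E) (y : ℝ) :
    √(B e e) * y + B e u / √(B e e) ≤ √(B (y • e + u) (y • e + u)) := by
  refine le_sqrt_of_sq_le ?_
  have hcs : (B e u / √(B e e)) ^ 2 ≤ B u u := by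
    rw [div_pow, sq_sqrt he.le, div_le_iff₀' he]
    exact sq_bilin_apply_le hB e u
  rw [apply_smul_add_self hB, add_sq, mul_pow, sq_sqrt he.le,
    show 2 * (√(B e e) * y) * (B e u / √(B e e)) = 2 * B e u * y by field_simp]
  linarith

lemma apply_self_pos_of_neg_smul_sub (hB : B.toBilinForm.IsPosSemidef)
    (he : 0 < B e e) {x : E} {y : ℝ} (hy : 0 < y) (hx : 0 ≤ B e (-(y • e) - x)) :
    0 < B x x := by
  have hnorm := le_sqrt_apply_smul_add hB he (-(y • e) - x) y
  rw [show y • e + (-(y • e) - x) = -x by abel, map_neg, map_neg, neg_apply, neg_neg] at hnorm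
  exact sqrt_pos.1 (lt_of_lt_of_le (by positivity) hnorm)

lemma tendsto_sqrt_apply_smul_add_sub (hB : B.toBilinForm.IsPosSemidef) (he : 0 < B e e) (u : E) :
    Tendsto (fun y => √(B (y • e + u) (y • e + u)) - √(B e e) * y) atTop
      (𝓝 (B e u / √(B e e))) := by
  have hk : 0 < √(B e e) := sqrt_pos.2 he
  have hlin : Tendsto (fun y => √(B e e) * y + B e u / √(B e e)) atTop atTop :=
    tendsto_atTop_add_const_right _ _ (tendsto_id.const_mul_atTop hk)
  have hupper : Tendsto (fun y => B e u / √(B e e) +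
      B u u / (2 * (√(B e e) * y + B e u / √(B e e)))) atTop (𝓝 (B e u / √(B e e) + 0)) :=
    (tendsto_const_nhds.div_atTop (hlin.const_mul_atTop two_pos)).const_add _
  rw [add_zero] at hupper
  refine tendsto_of_tendsto_of_tendsto_of_le_of_le' tendsto_const_nhds hupper
    (Eventually.of_forall fun y => ?_) ?_
  · linarith [le_sqrt_apply_smul_add hB he u y]
  filter_upwards [hlin.eventually_gt_atTop 0] with y hy
  rw [sub_le_iff_le_add', ← add_assoc, sqrt_le_left (add_nonneg hy.le
    (div_nonneg (bilin_apply_self_nonneg hB u) (by linarith))), apply_smul_add_self hB, add_sq]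
  have hcross : 2 * (√(B e e) * y + B e u / √(B e e)) *
      (B u u / (2 * (√(B e e) * y + B e u / √(B e e)))) = B u u :=
    mul_div_cancel₀ _ (mul_pos two_pos hy).ne'
  have hsq : B e e * y ^ 2 + 2 * B e u * y ≤ (√(B e e) * y + B e u / √(B e e)) ^ 2 := by
    rw [add_sq, mul_pow, sq_sqrt he.le,
      show 2 * (√(B e e) * y) * (B e u / √(B e e)) = 2 * B e u * y by field_simp]
    linarith [sq_nonneg (B e u / √(B e e))]
  rw [hcross]
  nlinarith [sq_nonneg (B u u / (2 * (√(B e e) * y + B e u / √(B e e))))]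

lemma besselDensity_neg_smul_add (hB : B.toBilinForm.IsPosSemidef) (θ β ν : ℝ) (e u : E) (y : ℝ) :
    besselDensity B (θ • e) β ν (-(y • e + u)) * exp (√(B e e) * (β + θ * √(B e e)) * y) =
      exp (-(θ * B e u)) * (√(B (y • e + u) (y • e + u)) ^ ν *
        besselK ν (β * √(B (y • e + u) (y • e + u))) * exp (β * (√(B e e) * y))) := by
  have hexp : exp (B (θ • e) (-(y • e + u))) * exp (√(B e e) * (β + θ * √(B e e)) * y) =
      exp (-(θ * B e u)) * exp (β * (√(B e e) * y)) := by
    simp only [← Real.exp_add, map_neg, map_add, map_smul, smul_apply, smul_eq_mul]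
    congr 1
    linear_combination θ * y * mul_self_sqrt (bilin_apply_self_nonneg hB e)
  simp only [besselDensity, map_neg, neg_apply, neg_neg]
  rw [map_neg] at hexp
  linear_combination (√(B (y • e + u) (y • e + u)) ^ ν *
    besselK ν (β * √(B (y • e + u) (y • e + u)))) * hexp

lemma sqrt_apply_smul_add_div_le (hB : B.toBilinForm.IsPosSemidef) {C y : ℝ} (hu : 0 ≤ B e u)
    (hC : √(B u u) ≤ C * B e u) (hy : 0 ≤ y) (hky : 1 ≤ √(B e e) * y) :
    √(B (y • e + u) (y • e + u)) / (√(B e e) * y) ≤ 1 + |C| * B e u := by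
  have hC' : √(B u u) ≤ |C| * B e u :=
    hC.trans (mul_le_mul_of_nonneg_right (le_abs_self C) hu)
  rw [div_le_iff₀ (by linarith)]
  nlinarith [sqrt_apply_smul_add_le hB e u hy, mul_nonneg (abs_nonneg C) hu]

/-- The exponential decay in `u` comes from the Cauchy–Schwarz lower bound for the norm of
`y • e + u`, the polynomial correction from the triangle inequality. -/
lemma exists_besselDensity_neg_smul_add_le (hB : B.toBilinForm.IsPosSemidef) (he : 0 < B e e)
    {S : Set E} {C : ℝ} (hS : ∀ u ∈ S, 0 ≤ B e u) (hC : ∀ u ∈ S, √(B u u) ≤ C * B e u)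
    {β : ℝ} (hβ : 0 < β) (θ ν : ℝ) {ε : ℝ} (hε : 0 < ε) :
    ∃ M, ∀ᶠ y in atTop, ∀ u ∈ S,
      besselDensity B (θ • e) β ν (-(y • e + u)) * exp (√(B e e) * (β + θ * √(B e e)) * y) *
        (√(B e e) * y) ^ (1 / 2 - ν) ≤ M * exp (-(β / √(B e e) + θ - ε) * B e u) := by
  have hk : 0 < √(B e e) := sqrt_pos.2 he
  obtain ⟨M, hM, hbessel⟩ := exists_rpow_mul_besselK_mul_exp_mul_rpow_le ν hβ
  obtain ⟨M', hpoly⟩ :=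
    exists_one_add_mul_rpow_le_exp |C| (abs_nonneg C) (abs_nonneg (ν - 1 / 2)) hε
  have hky : Tendsto (fun y => √(B e e) * y) atTop atTop := tendsto_id.const_mul_atTop hk
  refine ⟨M * M', ?_⟩
  filter_upwards [hky.eventually hbessel, hky.eventually_ge_atTop 1, eventually_ge_atTop 0]
    with y hy hy1 hy0 u hu
  have hlower := le_sqrt_apply_smul_add hB he u y
  have hratio := sqrt_apply_smul_add_div_le hB (hS u hu) (hC u hu) hy0 hy1
  rw [besselDensity_neg_smul_add hB]
  set N := √(B (y • e + u) (y • e + u))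
  have hpow : (N / (√(B e e) * y)) ^ |ν - 1 / 2| ≤ M' * exp (ε * B e u) :=
    (rpow_le_rpow (by positivity) hratio (abs_nonneg _)).trans (hpoly _ (hS u hu))
  have hdecay : -(β * (N - √(B e e) * y)) ≤ -(β / √(B e e) * B e u) := by
    rw [div_mul_eq_mul_div, mul_div_assoc]
    nlinarith
  have hN : √(B e e) * y ≤ N := by
    linarith [div_nonneg (hS u hu) hk.le]
  calc _ = exp (-(θ * B e u)) * (N ^ ν * besselK ν (β * N) * exp (β * (√(B e e) * y)) *
          (√(B e e) * y) ^ (1 / 2 - ν)) := by ring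
    _ ≤ exp (-(θ * B e u)) * (M * (N / (√(B e e) * y)) ^ |ν - 1 / 2| *
          exp (-(β * (N - √(B e e) * y)))) :=
        mul_le_mul_of_nonneg_left (hy N hN) (exp_pos _).le
    _ ≤ exp (-(θ * B e u)) * (M * (M' * exp (ε * B e u)) * exp (-(β / √(B e e) * B e u))) := by
        have hM' : 0 ≤ M' * exp (ε * B e u) := (by positivity : (0 : ℝ) ≤ _).trans hpow
        gcongr
    _ = M * M' * (exp (-(θ * B e u)) * exp (ε * B e u) * exp (-(β / √(B e e) * B e u))) := by ring
    _ = _ := by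
        simp only [← Real.exp_add]
        ring_nf

variable [MeasurableSpace E] [BorelSpace E] {μ : Measure E}

theorem tendsto_setIntegral_besselDensity_neg_smul_add (hB : B.toBilinForm.IsPosSemidef)
    (he : 0 < B e e) {S : Set E} (hSm : MeasurableSet S) {C : ℝ} (hS : ∀ u ∈ S, 0 ≤ B e u)
    (hC : ∀ u ∈ S, √(B u u) ≤ C * B e u)
    (hint : ∀ c > 0, IntegrableOn (fun u => exp (-c * B e u)) S μ)
    {β θ : ℝ} (hβ : 0 < β) (hβθ : 0 < β + θ * √(B e e)) (ν : ℝ) :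
    Tendsto (fun y => (∫ u in S, besselDensity B (θ • e) β ν (-(y • e + u)) ∂μ) *
        exp (√(B e e) * (β + θ * √(B e e)) * y) * (√(B e e) * y) ^ (1 / 2 - ν)) atTop
      (𝓝 (√(π / (2 * β)) * ∫ u in S, exp (-(β / √(B e e) + θ) * B e u) ∂μ)) := by
  have hk : 0 < √(B e e) := sqrt_pos.2 he
  have hrate : 0 < β / √(B e e) + θ := by
    have := div_pos hβθ hk
    rwa [add_div, mul_div_cancel_right₀ _ hk.ne'] at this
  obtain ⟨M, hM⟩ := exists_besselDensity_neg_smul_add_le hB he hS hC hβ θ ν (half_pos hrate)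
  simp only [← integral_mul_const]
  rw [← integral_const_mul]
  refine tendsto_integral_filter_of_dominated_convergence
    (fun u => M * exp (-((β / √(B e e) + θ) / 2) * B e u)) (Eventually.of_forall fun y => ?_) ?_
    ((hint _ (half_pos hrate)).const_mul M) (ae_of_all _ fun u => ?_)
  · have hshift : Measurable fun u => besselDensity B (θ • e) β ν (-(y • e + u)) :=
      (measurable_besselDensity _ _ _).comp (Continuous.measurable (by fun_prop))
    exact ((hshift.mul_const _).mul_const _).aestronglyMeasurable
  · filter_upwards [hM, eventually_ge_atTop 0] with y hy hy0
    filter_upwards [ae_restrict_mem hSm] with u hu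
    rw [norm_of_nonneg (mul_nonneg (mul_nonneg (besselDensity_nonneg _ _ _ _) (exp_pos _).le)
      (by positivity))]
    convert hy u hu using 4
    ring
  · simp only [besselDensity_neg_smul_add hB]
    convert (tendsto_rpow_mul_besselK_mul_exp_mul_rpow ν hβ (tendsto_id.const_mul_atTop hk)
      (tendsto_sqrt_apply_smul_add_sub hB he u)).const_mul (exp (-(θ * B e u))) using 2
    · simp only [id]
      ring
    · rw [mul_left_comm, ← Real.exp_add]
      ring_nf

end Tail

section GammaMixtureTail

variable {E : Type*} [NormedAddCommGroup E] [NormedSpace ℝ E] [FiniteDimensional ℝ E]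
  [MeasurableSpace E] [BorelSpace E] {μ : Measure E} [μ.IsAddHaarMeasure]

lemma setIntegral_preimage_neg_sub (a : E) (S : Set E) (f : E → ℝ) :
    ∫ x in (-a - ·) ⁻¹' S, f x ∂μ = ∫ u in S, f (-(a + u)) ∂μ := by
  have hshift := (Measure.measurePreserving_sub_left μ (-a)).setIntegral_preimage_emb
    (MeasurableEquiv.subLeft (-a)).measurableEmbedding (fun u => f (-(a + u))) S
  simpa only [add_sub_cancel, add_sub_assoc', add_neg_cancel, zero_sub, neg_neg] using hshift

lemma sqrt_sq_add_sq_add_pos (x : ℝ) {b : ℝ} (hb : 0 < b) : 0 < √(x ^ 2 + b ^ 2) + x := by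
  have hlt : |x| < √(x ^ 2 + b ^ 2) :=
    lt_sqrt_of_sq_lt (by rw [sq_abs]; exact lt_add_of_pos_right _ (pow_pos hb 2))
  linarith [neg_abs_le x]

lemma two_mul_rpow_mul_sqrt_pi_div {β : ℝ} (hβ : 0 < β) (p d : ℝ) :
    2 * β ^ (d / 2 - p) * √(π / (2 * β)) = √(2 * π) * β ^ ((d - 1) / 2 - p) := by
  have hsqrt : √(π / (2 * β)) = √(2 * π) / (2 * √β) := by
    rw [show π / (2 * β) = 2 * π / (2 ^ 2 * β) by field_simp, sqrt_div (by positivity),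
      sqrt_mul (sq_nonneg 2), sqrt_sq zero_le_two]
  rw [hsqrt, show (d - 1) / 2 - p = d / 2 - p - 1 / 2 by ring, rpow_sub hβ _ (1 / 2),
    ← sqrt_eq_rpow]
  field_simp

variable {B : E →L[ℝ] E →L[ℝ] ℝ} {e : E} {Ω : Type*} [MeasurableSpace Ω] {P : Measure Ω}
  [IsProbabilityMeasure P]

theorem tendsto_measureReal_gammaMixture_neg_smul_sub_mem (hB : B.toBilinForm.IsPosSemidef)
    {k : ℝ} (hk : 0 < k) (he : B e e = k ^ 2) {S : Set E} (hSm : MeasurableSet S) {C : ℝ}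
    (hS : ∀ u ∈ S, 0 ≤ B e u) (hC : ∀ u ∈ S, √(B u u) ≤ C * B e u)
    (hint : ∀ r > 0, IntegrableOn (fun u => exp (-r * B e u)) S μ)
    {p b c : ℝ} (hp : 0 < p) (hb : 0 < b) (hc : 0 ≤ c) {W : Ω → ℝ} {Z : Ω → E}
    (hW : Measurable W) (hZ : Measurable Z) (hWlaw : P.map W = gammaMeasure p (b ^ 2 / 2))
    (hZlaw : P.map Z = μ.withDensity fun z => ENNReal.ofReal (c * exp (-(B z z) / 2)))
    (hindep : IndepFun W Z P) {θ β : ℝ} (hβ : β = √(θ ^ 2 * k ^ 2 + b ^ 2)) :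
    Tendsto (fun y =>
        P.real {ω | -(y • e) - (W ω • θ • e + √(W ω) • Z ω) ∈ S} * exp (k * (β + θ * k) * y) *
          y ^ ((finrank ℝ E + 1) / 2 - p))
      atTop (𝓝 (√(2 * π) * c * ((b ^ 2 / 2) ^ p / Gamma p) *
        β ^ ((finrank ℝ E - 1) / 2 - p) * k ^ (p - (finrank ℝ E + 1) / 2) *
          ∫ u in S, exp (-(β / k + θ) * B e u) ∂μ)) := by
  have hβ0 : 0 < β := hβ ▸ by positivity
  have hβθ : 0 < β + θ * k := by
    rw [hβ, ← mul_pow]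
    exact sqrt_sq_add_sq_add_pos (θ * k) hb
  have hke : √(B e e) = k := by rw [he, sqrt_sq hk.le]
  have htail := (tendsto_setIntegral_besselDensity_neg_smul_add hB (he ▸ pow_pos hk 2) hSm hS hC
    hint hβ0 (by rwa [hke]) (p - finrank ℝ E / 2)).const_mul (2 * c * ((b ^ 2 / 2) ^ p / Gamma p) *
      β ^ (finrank ℝ E / 2 - p) * k ^ (p - (finrank ℝ E + 1) / 2))
  simp only [hke] at htail
  convert htail.congr' ?_ using 2
  · linear_combination (-c * ((b ^ 2 / 2) ^ p / Gamma p) * k ^ (p - (finrank ℝ E + 1) / 2) *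
      ∫ u in S, exp (-(β / k + θ) * B e u) ∂μ) * two_mul_rpow_mul_sqrt_pi_div hβ0 p (finrank ℝ E)
  filter_upwards [eventually_gt_atTop 0] with y hy
  have hprob := measureReal_gammaMixture_mem hB hp hb hc hW hZ hWlaw hZlaw hindep (θ • e)
    (hSm.preimage (by fun_prop)) fun x hx =>
      apply_self_pos_of_neg_smul_sub hB (he ▸ pow_pos hk 2) hy (hS (-(y • e) - x) hx)
  have hm : B (θ • e) (θ • e) = θ ^ 2 * k ^ 2 := by
    simp only [map_smul, smul_apply, smul_eq_mul, he]
    ring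
  have hpow : k ^ (p - (finrank ℝ E + 1) / 2) * (k * y) ^ (1 / 2 - (p - finrank ℝ E / 2)) =
      y ^ ((finrank ℝ E + 1) / 2 - p) := by
    rw [mul_rpow hk.le hy.le, ← mul_assoc, ← rpow_add hk]
    ring_nf
    rw [rpow_zero, one_mul]
  rw [hm, ← hβ, setIntegral_preimage_neg_sub] at hprob
  rw [show {ω | -(y • e) - (W ω • θ • e + √(W ω) • Z ω) ∈ S} =
    {ω | W ω • θ • e + √(W ω) • Z ω ∈ (-(y • e) - ·) ⁻¹' S} from rfl, hprob, ← hpow]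
  ring

end GammaMixtureTail

section StandardNormal

/-- The precision form of the standard bivariate normal distribution with correlation `ρ`. -/
noncomputable def bivariatePrecision (ρ : ℝ) : ℝ × ℝ →L[ℝ] ℝ × ℝ →L[ℝ] ℝ :=
  let fst := ContinuousLinearMap.fst ℝ ℝ ℝ
  let snd := ContinuousLinearMap.snd ℝ ℝ ℝ
  (1 - ρ ^ 2)⁻¹ • ((ContinuousLinearMap.mul ℝ ℝ).bilinearComp fst (fst - ρ • snd) +
    (ContinuousLinearMap.mul ℝ ℝ).bilinearComp snd (snd - ρ • fst))

lemma bivariatePrecision_apply (ρ : ℝ) (x y : ℝ × ℝ) :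
    bivariatePrecision ρ x y =
      (x.1 * y.1 - ρ * (x.1 * y.2 + x.2 * y.1) + x.2 * y.2) / (1 - ρ ^ 2) := by
  simp only [bivariatePrecision, smul_apply, add_apply, sub_apply,
    ContinuousLinearMap.bilinearComp_apply, ContinuousLinearMap.mul_apply',
    ContinuousLinearMap.coe_fst', ContinuousLinearMap.coe_snd', smul_eq_mul]
  ring

lemma one_sub_sq_pos {ρ : ℝ} (hρ : ρ ∈ Ioo (-1 : ℝ) 1) : 0 < 1 - ρ ^ 2 := by
  nlinarith [hρ.1, hρ.2]

lemma bivariatePrecision_apply_one {ρ : ℝ} (hρ : ρ ∈ Ioo (-1 : ℝ) 1) (u : ℝ × ℝ) :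
    bivariatePrecision ρ (1, 1) u = (1 + ρ)⁻¹ * (u.1 + u.2) := by
  have h1 : 1 + ρ ≠ 0 := by linarith [hρ.1]
  rw [bivariatePrecision_apply, div_eq_iff (one_sub_sq_pos hρ).ne']
  field_simp
  ring

lemma isPosSemidef_bivariatePrecision {ρ : ℝ} (hρ : ρ ∈ Ioo (-1 : ℝ) 1) :
    (bivariatePrecision ρ).toBilinForm.IsPosSemidef where
  eq x y := by
    simp only [ContinuousLinearMap.toBilinForm_apply, bivariatePrecision_apply]
    ring
  nonneg x := by
    simp only [ContinuousLinearMap.toBilinForm_apply, bivariatePrecision_apply]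
    refine div_nonneg ?_ (one_sub_sq_pos hρ).le
    nlinarith [sq_nonneg (x.1 - ρ * x.2), mul_nonneg (one_sub_sq_pos hρ).le (sq_nonneg x.2)]

/-- The density of the standard bivariate normal distribution with correlation `ρ`. -/
noncomputable def bivariateGaussianPDF (ρ : ℝ) (z : ℝ × ℝ) : ℝ≥0∞ :=
  ENNReal.ofReal ((2 * π * √(1 - ρ ^ 2))⁻¹ * exp (-(bivariatePrecision ρ z z) / 2))

lemma bivariateGaussianPDF_eq (ρ : ℝ) (z : ℝ × ℝ) :
    bivariateGaussianPDF ρ z = ENNReal.ofReal ((2 * π * √(1 - ρ ^ 2))⁻¹ *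
      exp (-(z.1 ^ 2 - 2 * ρ * z.1 * z.2 + z.2 ^ 2) / (2 * (1 - ρ ^ 2)))) := by
  rw [bivariateGaussianPDF, bivariatePrecision_apply, mul_comm 2 (1 - ρ ^ 2), ← div_div]
  ring_nf

lemma bivariateGaussianPDF_eq_mul {ρ : ℝ} (hρ : ρ ∈ Ioo (-1 : ℝ) 1) (z : ℝ × ℝ) :
    bivariateGaussianPDF ρ z =
      gaussianPDF 0 1 z.1 * gaussianPDF (ρ * z.1) (1 - ρ ^ 2).toNNReal z.2 := by
  have hvar := one_sub_sq_pos hρ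
  have hexp : exp (-(z.1 ^ 2 - 2 * ρ * z.1 * z.2 + z.2 ^ 2) / (2 * (1 - ρ ^ 2))) =
      exp (-z.1 ^ 2 / 2) * exp (-(z.2 - ρ * z.1) ^ 2 / (2 * (1 - ρ ^ 2))) := by
    rw [← Real.exp_add]
    congr 1
    field_simp
    ring
  rw [bivariateGaussianPDF_eq, gaussianPDF, gaussianPDF,
    ← ENNReal.ofReal_mul (gaussianPDFReal_nonneg _ _ _), hexp]
  simp only [gaussianPDFReal, Real.coe_toNNReal _ hvar.le, NNReal.coe_one, mul_one, sub_zero]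
  rw [sqrt_mul two_pi_pos.le (1 - ρ ^ 2), ← mul_self_sqrt two_pi_pos.le]
  simp only [mul_inv, sqrt_mul_self (sqrt_nonneg _)]
  ring_nf

lemma map_fst_withDensity_bivariateGaussianPDF {ρ : ℝ} (hρ : ρ ∈ Ioo (-1 : ℝ) 1) :
    (volume.withDensity (bivariateGaussianPDF ρ)).map Prod.fst = gaussianReal 0 1 := by
  have hmeas : Measurable (bivariateGaussianPDF ρ) := by
    simp only [funext (bivariateGaussianPDF_eq ρ)]
    fun_prop
  have hvar : (1 - ρ ^ 2).toNNReal ≠ 0 := (Real.toNNReal_pos.2 (one_sub_sq_pos hρ)).ne'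
  rw [gaussianReal_of_var_ne_zero 0 one_ne_zero]
  ext s hs
  rw [Measure.map_apply measurable_fst hs, withDensity_apply _ (measurable_fst hs),
    withDensity_apply _ hs, ← prod_univ, Measure.volume_eq_prod,
    setLIntegral_prod _ hmeas.aemeasurable]
  refine lintegral_congr fun x => ?_
  simp only [bivariateGaussianPDF_eq_mul hρ, Measure.restrict_univ]
  rw [lintegral_const_mul _ (measurable_gaussianPDF _ _), lintegral_gaussianPDF_eq_one _ hvar,
    mul_one]

end StandardNormal

section GammaMixture

lemma integrableOn_exp_neg_mul_Ici {r : ℝ} (hr : 0 < r) :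
    IntegrableOn (fun u : ℝ => exp (-r * u)) (Ici 0) := by
  rw [integrableOn_Ici_iff_integrableOn_Ioi]
  exact integrableOn_exp_mul_Ioi (neg_neg_of_pos hr) 0

lemma integral_exp_neg_mul_Ici {r : ℝ} (hr : 0 < r) :
    ∫ u in Ici (0 : ℝ), exp (-r * u) = r⁻¹ := by
  rw [integral_Ici_eq_integral_Ioi, integral_exp_mul_Ioi (neg_neg_of_pos hr) 0]
  simp [neg_div_neg_eq]

lemma integrableOn_exp_neg_mul_add_Ici {r : ℝ} (hr : 0 < r) :
    IntegrableOn (fun u : ℝ × ℝ => exp (-r * (u.1 + u.2))) (Ici 0) := by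
  simp only [mul_add, Real.exp_add]
  rw [← Prod.mk_zero_zero, ← Ici_prod_Ici, IntegrableOn, Measure.volume_eq_prod,
    ← Measure.prod_restrict]
  exact (integrableOn_exp_neg_mul_Ici hr).mul_prod (integrableOn_exp_neg_mul_Ici hr)

lemma integral_exp_neg_mul_add_Ici {r : ℝ} (hr : 0 < r) :
    ∫ u in Ici (0 : ℝ × ℝ), exp (-r * (u.1 + u.2)) = (r⁻¹) ^ 2 := by
  simp only [mul_add, Real.exp_add]
  rw [← Prod.mk_zero_zero, ← Ici_prod_Ici, Measure.volume_eq_prod, setIntegral_prod_mul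
    (fun x => exp (-r * x)) (fun x => exp (-r * x)), integral_exp_neg_mul_Ici hr, sq]

variable {Ω : Type*} [MeasurableSpace Ω] {P : Measure Ω} [IsProbabilityMeasure P]
  {W : Ω → ℝ} {p b : ℝ}

theorem tendsto_measureReal_gammaMixture_le_neg (hp : 0 < p) (hb : 0 < b) (hW : Measurable W)
    (hWlaw : P.map W = gammaMeasure p (b ^ 2 / 2)) {Z : Ω → ℝ} (hZ : Measurable Z)
    (hZlaw : P.map Z = gaussianReal 0 1) (hindep : IndepFun W Z P) {θ δ : ℝ}
    (hδ : δ = θ + √(θ ^ 2 + b ^ 2)) :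
    Tendsto (fun y => P.real {ω | θ * W ω + √(W ω) * Z ω ≤ -y} * exp (δ * y) * y ^ (1 - p)) atTop
      (𝓝 ((b ^ 2 / 2) ^ p / Gamma p * √(θ ^ 2 + b ^ 2) ^ (-p) * δ⁻¹)) := by
  have hB : (ContinuousLinearMap.mul ℝ ℝ).toBilinForm.IsPosSemidef :=
    { eq := fun x y => mul_comm x y, nonneg := fun x => mul_self_nonneg x }
  have hlaw : P.map Z = volume.withDensity fun z => ENNReal.ofReal
      ((√(2 * π))⁻¹ * exp (-(ContinuousLinearMap.mul ℝ ℝ z z) / 2)) := by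
    rw [hZlaw, gaussianReal_of_var_ne_zero 0 one_ne_zero]
    simp [gaussianPDF_def, gaussianPDFReal, sq]
  have hevent (y : ℝ) : {ω | θ * W ω + √(W ω) * Z ω ≤ -y} =
      {ω | -(y • 1) - (W ω • θ • 1 + √(W ω) • Z ω) ∈ Ici 0} := by
    ext ω
    simp [mul_comm θ]
  have hδ0 : 0 < δ := by simpa [hδ, add_comm] using sqrt_sq_add_sq_add_pos θ hb
  have htail := tendsto_measureReal_gammaMixture_neg_smul_sub_mem hB one_pos
    (e := (1 : ℝ)) (S := Ici 0) (C := 1) (by simp) measurableSet_Ici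
    (by simp) (by simp +contextual [sqrt_mul_self])
    (fun r hr => by simpa using integrableOn_exp_neg_mul_Ici hr) hp hb (by positivity) hW hZ hWlaw
    hlaw hindep (θ := θ) (β := √(θ ^ 2 + b ^ 2)) (by rw [one_pow, mul_one])
  simp only [mul_one, div_one, add_comm _ θ, ← hδ, finrank_self, Nat.cast_one, one_mul, one_rpow,
    ContinuousLinearMap.mul_apply', integral_exp_neg_mul_Ici hδ0,
    mul_inv_cancel₀ (sqrt_pos.2 two_pi_pos).ne'] at htail
  convert htail using 2
  · norm_num [hevent]
  · norm_num

lemma sqrt_bivariatePrecision_le {ρ : ℝ} (hρ : ρ ∈ Ioo (-1 : ℝ) 1) {u : ℝ × ℝ} (hu : u ∈ Ici 0) :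
    √(bivariatePrecision ρ u u) ≤ (1 + ρ) / √(1 - ρ ^ 2) * bivariatePrecision ρ (1, 1) u := by
  have hvar := one_sub_sq_pos hρ
  have hadd : 0 < 1 + ρ := by linarith [hρ.1]
  have hprod : 0 ≤ (1 + ρ) * (u.1 * u.2) := mul_nonneg hadd.le (mul_nonneg hu.1 hu.2)
  rw [bivariatePrecision_apply_one hρ, ← mul_assoc, div_mul_eq_mul_div,
    mul_inv_cancel₀ hadd.ne', one_div_mul_eq_div, bivariatePrecision_apply, sqrt_div' _ hvar.le]
  gcongr
  exact (sqrt_le_left (add_nonneg hu.1 hu.2)).2 (by linarith)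

theorem tendsto_measureReal_gammaMixture_le_neg_and (hp : 0 < p) (hb : 0 < b) (hW : Measurable W)
    (hWlaw : P.map W = gammaMeasure p (b ^ 2 / 2)) {ρ : ℝ} (hρ : ρ ∈ Ioo (-1 : ℝ) 1)
    {Z : Ω → ℝ × ℝ} (hZ : Measurable Z)
    (hZlaw : P.map Z = volume.withDensity (bivariateGaussianPDF ρ)) (hindep : IndepFun W Z P)
    {θ k β γ : ℝ} (hk : 0 < k) (hkρ : k ^ 2 = 2 / (1 + ρ)) (hβ : β = √(θ ^ 2 * k ^ 2 + b ^ 2))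
    (hγ : γ = β + θ * k) :
    Tendsto (fun y => P.real {ω | θ * W ω + √(W ω) * (Z ω).1 ≤ -y ∧
        θ * W ω + √(W ω) * (Z ω).2 ≤ -y} * exp (k * γ * y) * y ^ (3 / 2 - p)) atTop
      (𝓝 (√(2 * π) * (2 * π * √(1 - ρ ^ 2))⁻¹ * ((b ^ 2 / 2) ^ p / Gamma p) *
        β ^ (1 / 2 - p) * k ^ (p - 3 / 2) * (2 / (k * γ)) ^ 2)) := by
  have hadd : 0 < 1 + ρ := by linarith [hρ.1]
  have hγ0 : 0 < γ := by
    rw [hγ, hβ, ← mul_pow]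
    exact sqrt_sq_add_sq_add_pos (θ * k) hb
  have hone : bivariatePrecision ρ (1, 1) (1, 1) = k ^ 2 := by
    rw [bivariatePrecision_apply_one hρ, hkρ]
    ring
  have hrate : (β / k + θ) * (1 + ρ)⁻¹ = k * γ / 2 := by
    rw [hγ, inv_eq_one_div, show 1 / (1 + ρ) = k ^ 2 / 2 by rw [hkρ]; ring]
    field_simp
  have hevent (y : ℝ) : {ω | θ * W ω + √(W ω) * (Z ω).1 ≤ -y ∧
      θ * W ω + √(W ω) * (Z ω).2 ≤ -y} =
        {ω | -(y • (1, 1)) - (W ω • θ • (1, 1) + √(W ω) • Z ω) ∈ Ici 0} := by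
    ext ω
    simp [Prod.le_def, mul_comm θ]
  have htail := tendsto_measureReal_gammaMixture_neg_smul_sub_mem
    (isPosSemidef_bivariatePrecision hρ) hk hone measurableSet_Ici (S := Ici 0)
    (fun u hu => (bivariatePrecision_apply_one hρ u).symm ▸
      mul_nonneg (inv_nonneg.2 hadd.le) (add_nonneg hu.1 hu.2))
    (fun u hu => sqrt_bivariatePrecision_le hρ hu)
    (fun r hr => by
      simpa only [bivariatePrecision_apply_one hρ, ← mul_assoc, neg_mul] using
        integrableOn_exp_neg_mul_add_Ici (mul_pos hr (inv_pos.2 hadd)))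
    hp hb (by positivity) hW hZ hWlaw hZlaw hindep hβ
  simp only [← hγ, bivariatePrecision_apply_one hρ, ← mul_assoc, neg_mul, hrate] at htail
  simp only [← neg_mul, integral_exp_neg_mul_add_Ici (half_pos (mul_pos hk hγ0))] at htail
  convert htail using 2
  · norm_num [hevent]
  · norm_num

end GammaMixture

section QuantileInversion

variable {F J : ℝ → ℝ} {A B δ τ s t : ℝ}

lemma eventually_pos_of_tendsto_mul_exp_mul_rpow (hA : 0 < A)
    (hF : Tendsto (fun y => F y * exp (δ * y) * y ^ s) atTop (𝓝 A)) : ∀ᶠ y in atTop, 0 < F y := by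
  filter_upwards [hF.eventually (lt_mem_nhds hA), eventually_gt_atTop 0] with y hpos hy
  exact pos_of_mul_pos_left (pos_of_mul_pos_left hpos (rpow_nonneg hy.le s)) (exp_pos _).le

lemma tendsto_abs_log_div_of_tendsto_mul_exp_mul_rpow (hδ : 0 < δ) (hA : 0 < A)
    (hF : Tendsto (fun y => F y * exp (δ * y) * y ^ s) atTop (𝓝 A)) :
    Tendsto (fun y => |log (F y)| / y) atTop (𝓝 δ) := by
  have hlog : Tendsto (fun y : ℝ => log y / y) atTop (𝓝 0) := by
    simpa using tendsto_pow_log_div_mul_add_atTop 1 0 1 one_ne_zero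
  have hlim : Tendsto (fun y => |log (F y * exp (δ * y) * y ^ s) / y - δ - s * (log y / y)|) atTop
      (𝓝 |0 - δ - s * 0|) :=
    ((((hF.log hA.ne').div_atTop tendsto_id).sub_const δ).sub (hlog.const_mul s)).abs
  rw [mul_zero, sub_zero, zero_sub, abs_neg, abs_of_pos hδ] at hlim
  refine hlim.congr' ?_
  filter_upwards [eventually_pos_of_tendsto_mul_exp_mul_rpow hA hF, eventually_gt_atTop 0]
    with y hFy hy
  rw [log_mul (by positivity) (by positivity), log_mul hFy.ne' (exp_pos _).ne', log_exp,
    log_rpow hy, ← abs_of_pos hy, ← abs_div, abs_of_pos hy]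
  congr 1
  field_simp
  ring

lemma mul_exp_mul_rpow_rpow_mul_div_rpow {f l y : ℝ} (hf : 0 ≤ f) (hl : 0 ≤ l) (hy : 0 < y)
    (δ τ s t : ℝ) :
    (f * exp (δ * y) * y ^ s) ^ τ * (l / y) ^ (τ * s - t) =
      f ^ τ * l ^ (τ * s - t) * (exp (τ * δ * y) * y ^ t) := by
  have hpow : y ^ (s * τ) = y ^ t * y ^ (τ * s - t) := by
    rw [← rpow_add hy]
    ring_nf
  rw [mul_rpow (by positivity) (by positivity), mul_rpow hf (exp_pos _).le, ← rpow_mul hy.le,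
    ← Real.exp_mul, div_rpow hl hy.le, hpow, show δ * y * τ = τ * δ * y by ring]
  field_simp

theorem tendsto_div_rpow_mul_abs_log_rpow (hδ : 0 < δ) (hA : 0 < A)
    (hF : Tendsto (fun y => F y * exp (δ * y) * y ^ s) atTop (𝓝 A))
    (hJ : Tendsto (fun y => J y * exp (τ * δ * y) * y ^ t) atTop (𝓝 B)) :
    Tendsto (fun y => J y / (F y ^ τ * |log (F y)| ^ (τ * s - t))) atTop
      (𝓝 (B / (A ^ τ * δ ^ (τ * s - t)))) := by
  have hlim := hJ.div ((hF.rpow_const (p := τ) (Or.inl hA.ne')).mul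
    ((tendsto_abs_log_div_of_tendsto_mul_exp_mul_rpow hδ hA hF).rpow_const (p := τ * s - t)
      (Or.inl hδ.ne'))) (by positivity)
  refine hlim.congr' ?_
  filter_upwards [eventually_pos_of_tendsto_mul_exp_mul_rpow hA hF, eventually_gt_atTop 0]
    with y hFy hy
  rw [Pi.div_apply, mul_exp_mul_rpow_rpow_mul_div_rpow hFy.le (abs_nonneg _) hy, mul_assoc (J y),
    mul_div_mul_right _ _ (by positivity)]

lemma tendsto_neg_quantile_atTop {Q : ℝ → ℝ} (hF : Monotone F) (hpos : ∀ᶠ y in atTop, 0 < F (-y))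
    (hQ : ∀ u ∈ Ioo (0 : ℝ) 1, F (Q u) = u) : Tendsto (fun u => -Q u) (𝓝[>] 0) atTop := by
  refine tendsto_atTop.2 fun m => ?_
  obtain ⟨y, hFy, hmy⟩ := (hpos.and (eventually_ge_atTop m)).exists
  filter_upwards [Ioo_mem_nhdsGT one_pos, Ioo_mem_nhdsGT hFy] with u hu huy
  have hlt : Q u < -y := hF.reflect_lt (by rw [hQ u hu]; exact huy.2)
  linarith

theorem tendsto_comp_quantile_div_rpow_mul_abs_log_rpow {Q H : ℝ → ℝ} (hmono : Monotone F)
    (hQ : ∀ u ∈ Ioo (0 : ℝ) 1, F (Q u) = u) (hδ : 0 < δ) (hA : 0 < A)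
    (hF : Tendsto (fun y => F (-y) * exp (δ * y) * y ^ s) atTop (𝓝 A))
    (hH : Tendsto (fun y => H (-y) * exp (τ * δ * y) * y ^ t) atTop (𝓝 B)) :
    Tendsto (fun u => H (Q u) / (u ^ τ * |log u| ^ (τ * s - t))) (𝓝[>] 0)
      (𝓝 (B / (A ^ τ * δ ^ (τ * s - t)))) := by
  refine ((tendsto_div_rpow_mul_abs_log_rpow (F := fun y => F (-y)) (J := fun y => H (-y)) hδ hA hF
    hH).comp (tendsto_neg_quantile_atTop hmono
      (eventually_pos_of_tendsto_mul_exp_mul_rpow hA hF) hQ)).congr' ?_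
  filter_upwards [Ioo_mem_nhdsGT one_pos] with u hu
  simp only [Function.comp_apply, neg_neg, hQ u hu]

end QuantileInversion

section Constants

lemma withDensity_ite_pos_eq_gammaMeasure (a r : ℝ) :
    (volume.withDensity fun w => ENNReal.ofReal
      (if 0 < w then r ^ a * w ^ (a - 1) * exp (-r * w) / Gamma a else 0)) = gammaMeasure a r := by
  refine withDensity_congr_ae ?_
  filter_upwards [compl_mem_ae_iff.2 (measure_singleton (0 : ℝ))] with w hw
  rcases lt_or_gt_of_ne hw with hneg | hpos
  · rw [if_neg hneg.not_gt, gammaPDF_of_neg hneg, ENNReal.ofReal_zero]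
  · rw [if_pos hpos, gammaPDF_of_nonneg hpos.le]
    ring_nf

variable {p b θ ρ α k β γ δ Kbar : ℝ}

lemma rpow_div_Gamma_eq (hb : 0 < b)
    (hK : Kbar = 2 ^ (p - 1) * b ^ (-(2 * p)) * Gamma p) :
    (b ^ 2 / 2) ^ p / Gamma p = (2 * Kbar)⁻¹ := by
  have hpow : (b ^ 2 / 2) ^ p = (2 * (2 ^ (p - 1) * b ^ (-(2 * p))))⁻¹ := by
    rw [div_rpow (by positivity) two_pos.le, ← rpow_natCast_mul hb.le, rpow_neg hb.le,
      rpow_sub_one two_ne_zero, Nat.cast_ofNat]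
    field_simp
  rw [hpow, hK, div_eq_mul_inv, ← mul_inv]
  ring_nf

lemma one_add_sq_eq_two_div (hρ : ρ ∈ Ioo (-1 : ℝ) 1) (hα : α = √((1 - ρ) / (1 + ρ))) :
    1 + α ^ 2 = 2 / (1 + ρ) := by
  have hadd : 0 < 1 + ρ := by linarith [hρ.1]
  rw [hα, sq_sqrt (div_nonneg (by linarith [hρ.2]) hadd.le)]
  field_simp
  ring

lemma sqrt_one_sub_sq_eq (hρ : ρ ∈ Ioo (-1 : ℝ) 1) (hα : α = √((1 - ρ) / (1 + ρ))) :
    √(1 - ρ ^ 2) = 2 * α / (1 + α ^ 2) := by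
  have hadd : 0 < 1 + ρ := by linarith [hρ.1]
  rw [one_add_sq_eq_two_div hρ hα, hα, show 1 - ρ ^ 2 = (1 - ρ) / (1 + ρ) * (1 + ρ) ^ 2 by
    field_simp; ring, sqrt_mul (div_nonneg (by linarith [hρ.2]) hadd.le), sqrt_sq hadd.le]
  field_simp

lemma marginal_tail_const_eq :
    (2 * Kbar)⁻¹ * √(θ ^ 2 + b ^ 2) ^ (-p) * δ⁻¹ =
      (2 * Kbar * (θ ^ 2 + b ^ 2) ^ (p / 2) * δ)⁻¹ := by
  have hpow : √(θ ^ 2 + b ^ 2) ^ (-p) = ((θ ^ 2 + b ^ 2) ^ (p / 2))⁻¹ := by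
    rw [sqrt_eq_rpow, ← rpow_mul (by positivity), ← rpow_neg (by positivity)]
    ring_nf
  rw [hpow, ← mul_inv, ← mul_inv]

lemma joint_tail_const_eq (hρ : ρ ∈ Ioo (-1 : ℝ) 1) (hα : α = √((1 - ρ) / (1 + ρ))) (hβ : 0 < β) :
    √(2 * π) * (2 * π * √(1 - ρ ^ 2))⁻¹ * (2 * Kbar)⁻¹ * β ^ (1 / 2 - p) *
        √(1 + α ^ 2) ^ (p - 3 / 2) * (2 / (√(1 + α ^ 2) * γ)) ^ 2 =
      (1 + α ^ 2) ^ ((2 * p - 3) / 4) / (√(2 * π) * Kbar * β ^ (p - 1 / 2) * α * γ ^ 2) := by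
  have hk : 0 < 1 + α ^ 2 := by positivity
  have hpow : √(1 + α ^ 2) ^ (p - 3 / 2) = (1 + α ^ 2) ^ ((2 * p - 3) / 4) := by
    rw [sqrt_eq_rpow, ← rpow_mul hk.le]
    ring_nf
  have hβpow : β ^ (1 / 2 - p) = (β ^ (p - 1 / 2))⁻¹ := by
    rw [← rpow_neg hβ.le, neg_sub]
  have hpi : √(2 * π) * (2 * π)⁻¹ = (√(2 * π))⁻¹ := by
    rw [← div_eq_mul_inv, sqrt_div_self]
  rw [sqrt_one_sub_sq_eq hρ hα, hpow, hβpow, mul_inv (2 * π), ← mul_assoc (√(2 * π)), hpi, div_pow,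
    mul_pow, sq_sqrt hk.le]
  field_simp

lemma div_rpow_mul_rpow_eq {A B τ : ℝ} (hδ : 0 < δ) (hA : 0 < A) :
    B / (A ^ τ * δ ^ (τ * (1 - p) - (3 / 2 - p))) =
      B / δ ^ (p - 3 / 2) * (A ^ (-τ) * δ ^ ((p - 1) * τ)) := by
  have hpow : δ ^ (τ * (1 - p) - (3 / 2 - p)) = δ ^ (p - 3 / 2) * (δ ^ ((p - 1) * τ))⁻¹ := by
    rw [← rpow_neg hδ.le, ← rpow_add hδ]
    ring_nf
  rw [hpow, rpow_neg hA.le]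
  field_simp

end Constants

section CopulaTails

variable {Ω : Type*} [MeasurableSpace Ω] {P : Measure Ω} [IsProbabilityMeasure P]
  {W Z₁ Z₂ : Ω → ℝ} {p b θ ρ Kbar : ℝ}

theorem tendsto_marginal_lowerTail (hp : 0 < p) (hb : 0 < b) (hρ : ρ ∈ Ioo (-1 : ℝ) 1)
    (hW : Measurable W) (hWlaw : P.map W = gammaMeasure p (b ^ 2 / 2))
    (hZ : Measurable fun ω => (Z₁ ω, Z₂ ω))
    (hZlaw : P.map (fun ω => (Z₁ ω, Z₂ ω)) = volume.withDensity (bivariateGaussianPDF ρ))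
    (hindep : IndepFun W (fun ω => (Z₁ ω, Z₂ ω)) P) {δ : ℝ} (hδ : δ = θ + √(θ ^ 2 + b ^ 2))
    (hK : Kbar = 2 ^ (p - 1) * b ^ (-(2 * p)) * Gamma p) :
    Tendsto (fun y => P.real {ω | θ * W ω + √(W ω) * Z₁ ω ≤ -y} * exp (δ * y) * y ^ (1 - p)) atTop
      (𝓝 (2 * Kbar * (θ ^ 2 + b ^ 2) ^ (p / 2) * δ)⁻¹) := by
  have hZ₁ : P.map Z₁ = gaussianReal 0 1 := by
    rw [← map_fst_withDensity_bivariateGaussianPDF hρ, ← hZlaw, Measure.map_map measurable_fst hZ]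
    rfl
  rw [← marginal_tail_const_eq, ← rpow_div_Gamma_eq hb hK]
  exact tendsto_measureReal_gammaMixture_le_neg hp hb hW hWlaw hZ.fst hZ₁
    (hindep.comp measurable_id measurable_fst) hδ

theorem tendsto_joint_lowerTail (hp : 0 < p) (hb : 0 < b) (hρ : ρ ∈ Ioo (-1 : ℝ) 1)
    (hW : Measurable W) (hWlaw : P.map W = gammaMeasure p (b ^ 2 / 2))
    (hZ : Measurable fun ω => (Z₁ ω, Z₂ ω))
    (hZlaw : P.map (fun ω => (Z₁ ω, Z₂ ω)) = volume.withDensity (bivariateGaussianPDF ρ))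
    (hindep : IndepFun W (fun ω => (Z₁ ω, Z₂ ω)) P) {α β γ : ℝ} (hα : α = √((1 - ρ) / (1 + ρ)))
    (hβ : β = √(θ ^ 2 * (1 + α ^ 2) + b ^ 2)) (hγ : γ = β + θ * √(1 + α ^ 2))
    (hK : Kbar = 2 ^ (p - 1) * b ^ (-(2 * p)) * Gamma p) :
    Tendsto (fun y => P.real {ω | θ * W ω + √(W ω) * Z₁ ω ≤ -y ∧ θ * W ω + √(W ω) * Z₂ ω ≤ -y} *
        exp (√(1 + α ^ 2) * γ * y) * y ^ (3 / 2 - p)) atTop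
      (𝓝 ((1 + α ^ 2) ^ ((2 * p - 3) / 4) /
        (√(2 * π) * Kbar * β ^ (p - 1 / 2) * α * γ ^ 2))) := by
  have hk : √(1 + α ^ 2) ^ 2 = 1 + α ^ 2 := sq_sqrt (by positivity)
  rw [← joint_tail_const_eq hρ hα (by rw [hβ]; positivity), ← rpow_div_Gamma_eq hb hK]
  exact tendsto_measureReal_gammaMixture_le_neg_and hp hb hW hWlaw hρ hZ hZlaw hindep
    (by positivity) (hk.trans (one_add_sq_eq_two_div hρ hα)) (by rw [hk, hβ]) hγ

end CopulaTails

/-- Main theorem: exact asymptotic rate of decay of the copula diagonal of the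
equi-skew GH model GH(0,R,(θ,θ),p,0,b) (including the equi-skew Variance Gamma for
p = 1/2, b = √(2/ν)).  With W ~ Gamma(p, b²/2) independent of a standardized bivariate
normal (Z₁,Z₂) with correlation ρ, X_i = θW + √W·Z_i with common marginal distribution
function F and quantile function F⁻¹, and with α, β, γ, δ, τ, K̄, A, C₁, C₂ as in the
paper,
  P(X₁ ≤ F⁻¹(u), X₂ ≤ F⁻¹(u)) / (u^τ·|log u|^{(p−3/2)−(p−1)τ}) → C₁C₂   as u → 0⁺,
i.e. C(u,u) = u^τ L(u) with L(u) ∼ C₁C₂|log u|^{(p−1)(1−τ)−1/2}. -/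
theorem stmt_17 (p b θ ρ : ℝ) (hp : 0 < p) (hb : 0 < b) (hρ : ρ ∈ Set.Ioo (-1 : ℝ) 1)
    {Ω : Type*} [MeasurableSpace Ω] (P : Measure Ω) [IsProbabilityMeasure P]
    (W Z₁ Z₂ : Ω → ℝ) (hW : Measurable W) (hZ : Measurable fun ω => (Z₁ ω, Z₂ ω))
    (hWlaw : Measure.map W P =
      volume.withDensity fun w : ℝ => ENNReal.ofReal
        (if 0 < w then
          (b ^ 2 / 2) ^ p * w ^ (p - 1) * Real.exp (-(b ^ 2 / 2) * w) / Real.Gamma p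
        else 0))
    (hZlaw : Measure.map (fun ω => (Z₁ ω, Z₂ ω)) P =
      volume.withDensity fun z : ℝ × ℝ => ENNReal.ofReal
        ((2 * Real.pi * Real.sqrt (1 - ρ ^ 2))⁻¹ *
          Real.exp (-(z.1 ^ 2 - 2 * ρ * z.1 * z.2 + z.2 ^ 2) / (2 * (1 - ρ ^ 2)))))
    (hindep : ProbabilityTheory.IndepFun W (fun ω => (Z₁ ω, Z₂ ω)) P)
    (X₁ X₂ : Ω → ℝ)
    (hX₁ : ∀ ω, X₁ ω = θ * W ω + Real.sqrt (W ω) * Z₁ ω)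
    (hX₂ : ∀ ω, X₂ ω = θ * W ω + Real.sqrt (W ω) * Z₂ ω)
    (F Finv : ℝ → ℝ)
    (hF : ∀ x, F x = (P {ω | X₁ ω ≤ x}).toReal)
    (hFmarg : ∀ x, F x = (P {ω | X₂ ω ≤ x}).toReal)
    (hFinv : ∀ u ∈ Ioo (0 : ℝ) 1, F (Finv u) = u)
    (α β γ δ τ Kbar A C₁ C₂ : ℝ)
    (hα : α = Real.sqrt ((1 - ρ) / (1 + ρ)))
    (hβ : β = Real.sqrt (θ ^ 2 * (1 + α ^ 2) + b ^ 2))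
    (hγ : γ = β + θ * Real.sqrt (1 + α ^ 2))
    (hδ : δ = θ + Real.sqrt (θ ^ 2 + b ^ 2))
    (hτ : τ = Real.sqrt (1 + α ^ 2) * γ / δ)
    (hK : Kbar = 2 ^ (p - 1) * b ^ (-(2 * p)) * Real.Gamma p)
    (hA : A = (2 * Kbar * (θ ^ 2 + b ^ 2) ^ (p / 2) * δ)⁻¹)
    (hC₁ : C₁ = (1 + α ^ 2) ^ ((2 * p - 3) / 4) /
      (Real.sqrt (2 * Real.pi) * Kbar * β ^ (p - 1 / 2) * α * γ ^ 2 * δ ^ (p - 3 / 2)))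
    (hC₂ : C₂ = A ^ (-τ) * δ ^ ((p - 1) * τ)) :
    Tendsto
      (fun u => (P {ω | X₁ ω ≤ Finv u ∧ X₂ ω ≤ Finv u}).toReal /
        (u ^ τ * |Real.log u| ^ (p - 3 / 2 - (p - 1) * τ)))
      (nhdsWithin 0 (Ioi 0)) (nhds (C₁ * C₂)) := by
  have hδ0 : 0 < δ := by simpa [hδ, add_comm] using sqrt_sq_add_sq_add_pos θ hb
  have hA0 : 0 < A := by
    have := Gamma_pos_of_pos hp
    rw [hA, hK]
    positivity
  have hτδ : √(1 + α ^ 2) * γ = τ * δ := by rw [hτ, div_mul_cancel₀ _ hδ0.ne']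
  rw [withDensity_ite_pos_eq_gammaMeasure] at hWlaw
  simp only [← bivariateGaussianPDF_eq] at hZlaw
  have hmono : Monotone F := fun x y hxy => by
    rw [hF, hF]
    exact measureReal_mono fun ω hω => le_trans hω hxy
  have hmarginal := tendsto_marginal_lowerTail hp hb hρ hW hWlaw hZ hZlaw hindep hδ hK
  have hjoint := tendsto_joint_lowerTail hp hb hρ hW hWlaw hZ hZlaw hindep hα hβ hγ hK
  simp only [← hX₁, ← hX₂, measureReal_def, ← hF, ← hA, hτδ] at hmarginal hjoint
  have hdiag := tendsto_comp_quantile_div_rpow_mul_abs_log_rpow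
    (H := fun x => (P {ω | X₁ ω ≤ x ∧ X₂ ω ≤ x}).toReal) hmono hFinv hδ0 hA0 hmarginal hjoint
  rw [div_rpow_mul_rpow_eq hδ0 hA0, div_div, ← hC₁, ← hC₂] at hdiag
  convert hdiag using 5
  ring
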